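/- The Clifford group 𝒞, i.e., the subgroup of GL(3,ℂ) generated by H and S, is a finite group of order 648. -/

import Mathlib

open Matrix Complex

noncomputable section

/-- ω = exp(2πi/3), a primitive third root of unity. -/
def ω : ℂ := exp (2 * Real.pi * I / 3)

/-- ζ = exp(2πi/9), a primitive ninth root of unity. -/
def ζ : ℂ := exp (2 * Real.pi * I / 9)

/-- The qutrit Pauli X matrix. -/
def Xmat : Matrix (Fin 3) (Fin 3) ℂ := !![0,0,1; 1,0,0; 0,1,0]

/-- The qutrit Pauli Z matrix. -/
def Zmat : Matrix (Fin 3) (Fin 3) ℂ := !![1,0,0; 0,ω,0; 0,0,ω^2]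

/-- The qutrit Hadamard matrix H = (1/(i√3))·[[1,1,1],[1,ω,ω²],[1,ω²,ω]]. -/
def Hmat : Matrix (Fin 3) (Fin 3) ℂ :=
  (I * (Real.sqrt 3 : ℂ))⁻¹ • !![1,1,1; 1,ω,ω^2; 1,ω^2,ω]

/-- The qutrit phase matrix S = ζ⁸·diag(1,1,ω). -/
def Smat : Matrix (Fin 3) (Fin 3) ℂ := ζ^8 • !![1,0,0; 0,1,0; 0,0,ω]

/-- The qutrit T matrix T = diag(1,ζ,ζ⁸). -/
def Tmat : Matrix (Fin 3) (Fin 3) ℂ := !![1,0,0; 0,ζ,0; 0,0,ζ^8]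

lemma omega_ne_zero : ω ≠ 0 := Complex.exp_ne_zero _
lemma zeta_ne_zero : ζ ≠ 0 := Complex.exp_ne_zero _

lemma omega_im_pos : 0 < ω.im := by
  have h : ω = Complex.exp ((2 * Real.pi / 3 : ℝ) * I) := by
    rw [ω]; push_cast; ring_nf
  rw [h, Complex.exp_ofReal_mul_I_im]
  apply Real.sin_pos_of_pos_of_lt_pi
  · positivity
  · nlinarith [Real.pi_pos]

lemma omega_ne_one : ω ≠ 1 := by
  intro h
  have := omega_im_pos
  rw [h] at this
  simp at this

lemma omega_cube : ω ^ 3 = 1 := by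
  rw [ω, ← Complex.exp_nat_mul]
  rw [show (3:ℕ) * (2 * Real.pi * I / 3) = 2 * Real.pi * I by push_cast; ring]
  exact Complex.exp_two_pi_mul_I

lemma detX : Xmat.det ≠ 0 := by
  simp [Xmat, Matrix.det_fin_three]

lemma detZ : Zmat.det ≠ 0 := by
  simp [Zmat, Matrix.det_fin_three, omega_ne_zero]

lemma detS : Smat.det ≠ 0 := by
  simp [Smat, Matrix.det_fin_three, omega_ne_zero, zeta_ne_zero]

lemma detT : Tmat.det ≠ 0 := by
  simp [Tmat, Matrix.det_fin_three, zeta_ne_zero]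

lemma detH : Hmat.det ≠ 0 := by
  rw [Hmat, Matrix.det_smul]
  apply mul_ne_zero
  · apply pow_ne_zero
    apply inv_ne_zero
    apply mul_ne_zero Complex.I_ne_zero
    simp [Complex.ofReal_ne_zero]
  · rw [Matrix.det_fin_three]
    simp [Matrix.vecHead, Matrix.vecTail]
    intro h
    have h3 : ω ^ 3 = 1 := omega_cube
    have key : 3 * ω * (ω - 1) = 0 := by linear_combination h + ω * h3
    rcases mul_eq_zero.mp key with h' | h'
    · rcases mul_eq_zero.mp h' with h'' | h''
      · norm_num at h''
      · exact omega_ne_zero h''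
    · exact omega_ne_one (by linear_combination h')

/-- X as an element of GL(3, ℂ). -/
def Xg : GL (Fin 3) ℂ := Matrix.GeneralLinearGroup.mkOfDetNeZero Xmat detX

/-- Z as an element of GL(3, ℂ). -/
def Zg : GL (Fin 3) ℂ := Matrix.GeneralLinearGroup.mkOfDetNeZero Zmat detZ

/-- H as an element of GL(3, ℂ). -/
def Hg : GL (Fin 3) ℂ := Matrix.GeneralLinearGroup.mkOfDetNeZero Hmat detH

/-- S as an element of GL(3, ℂ). -/
def Sg : GL (Fin 3) ℂ := Matrix.GeneralLinearGroup.mkOfDetNeZero Smat detS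

/-- T as an element of GL(3, ℂ). -/
def Tg : GL (Fin 3) ℂ := Matrix.GeneralLinearGroup.mkOfDetNeZero Tmat detT

/-- The Clifford group 𝒞: the subgroup of GL(3,ℂ) generated by H and S. -/
def Cliff : Subgroup (GL (Fin 3) ℂ) := Subgroup.closure {Hg, Sg}

/-- The Clifford+T group: the subgroup of GL(3,ℂ) generated by H, S and T. -/
def CliffT : Subgroup (GL (Fin 3) ℂ) := Subgroup.closure {Hg, Sg, Tg}

/-- The subgroup 𝒮 of GL(3,ℂ) generated by S and X. -/
def Sgrp : Subgroup (GL (Fin 3) ℂ) := Subgroup.closure {Sg, Xg}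

/-- Letters of words over the alphabet {H, S, T}. -/
inductive Letter : Type
  | H : Letter
  | S : Letter
  | T : Letter
  deriving DecidableEq

/-- The gate associated to a letter. -/
def Letter.g : Letter → GL (Fin 3) ℂ
  | .H => Hg
  | .S => Sg
  | .T => Tg

/-- The product of the letters of a word. -/
def wordProd (w : List Letter) : GL (Fin 3) ℂ := (w.map Letter.g).prod

/-- The allowed prefixes of a canonical form: ε, T, H²T. -/
def Prefixes : Set (List Letter) := {[], [.T], [.H, .H, .T]}

/-- The allowed syllables of a canonical form: HT, H³T, SHT, SH³T, S²HT, S²H³T. -/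
def Syllables : Set (List Letter) :=
  {[.H, .T], [.H, .H, .H, .T], [.S, .H, .T],
   [.S, .H, .H, .H, .T], [.S, .S, .H, .T], [.S, .S, .H, .H, .H, .T]}

/-- The T-count of a canonical form with prefix `p` and syllable list `ss`:
`k` if the prefix is empty and `k+1` otherwise, where `k` is the number of syllables. -/
def TCount (p : List Letter) (ss : List (List Letter)) : ℕ :=
  ss.length + (if p = [] then 0 else 1)

/-- P₊ = (P + P²)/√6. -/
def Pplus (P : Matrix (Fin 3) (Fin 3) ℂ) : Matrix (Fin 3) (Fin 3) ℂ :=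
  ((Real.sqrt 6 : ℂ))⁻¹ • (P + P ^ 2)

/-- P₋ = i(P − P²)/√6. -/
def Pminus (P : Matrix (Fin 3) (Fin 3) ℂ) : Matrix (Fin 3) (Fin 3) ℂ :=
  (I * ((Real.sqrt 6 : ℂ))⁻¹) • (P - P ^ 2)

/-- The ordered tuple (Q₁, …, Q₈) = (Z₊, X₊, (XZ)₊, (XZ²)₊, Z₋, X₋, (XZ)₋, (XZ²)₋). -/
def Q : Fin 8 → Matrix (Fin 3) (Fin 3) ℂ :=
  ![Pplus Zmat, Pplus Xmat, Pplus (Xmat * Zmat), Pplus (Xmat * Zmat ^ 2),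
    Pminus Zmat, Pminus Xmat, Pminus (Xmat * Zmat), Pminus (Xmat * Zmat ^ 2)]

/-- The adjoint representation Û of U, the 8×8 real matrix with
entries Û_{ij} = tr(Qᵢ U Qⱼ U†). -/
def adj (U : Matrix (Fin 3) (Fin 3) ℂ) : Matrix (Fin 8) (Fin 8) ℝ :=
  Matrix.of fun i j => (Matrix.trace (Q i * U * Q j * Uᴴ)).re

/-- The top-left 4×4 quadrant Û₊₊. -/
def blockPP (A : Matrix (Fin 8) (Fin 8) ℝ) : Matrix (Fin 4) (Fin 4) ℝ :=
  Matrix.of fun i j => A ⟨i.val, by omega⟩ ⟨j.val, by omega⟩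

/-- The top-right 4×4 quadrant Û₊₋. -/
def blockPM (A : Matrix (Fin 8) (Fin 8) ℝ) : Matrix (Fin 4) (Fin 4) ℝ :=
  Matrix.of fun i j => A ⟨i.val, by omega⟩ ⟨j.val + 4, by omega⟩

/-- The bottom-left 4×4 quadrant Û₋₊. -/
def blockMP (A : Matrix (Fin 8) (Fin 8) ℝ) : Matrix (Fin 4) (Fin 4) ℝ :=
  Matrix.of fun i j => A ⟨i.val + 4, by omega⟩ ⟨j.val, by omega⟩

/-- The bottom-right 4×4 quadrant Û₋₋. -/
def blockMM (A : Matrix (Fin 8) (Fin 8) ℝ) : Matrix (Fin 4) (Fin 4) ℝ :=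
  Matrix.of fun i j => A ⟨i.val + 4, by omega⟩ ⟨j.val + 4, by omega⟩

/-- α = sin(2π/9). -/
def αR : ℝ := Real.sin (2 * Real.pi / 9)

/-- The ring ℤ[α]: the subring of ℝ generated by 1/2 and α. -/
def Zα : Subring ℝ := Subring.closure {1/2, αR}

/-- The ring ℤ[1/2, 1/α]: the subring of ℝ generated by 1/2, α and α⁻¹. -/
def Zhα : Subring ℝ := Subring.closure {1/2, αR, αR⁻¹}

lemma alpha_mem_Zα : αR ∈ Zα := Subring.subset_closure (by simp)

set_option linter.unusedSimpArgs false

lemma zeta_pow_three : ζ ^ 3 = ω := by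
  rw [ζ, ω, ← Complex.exp_nat_mul]
  congr 1
  push_cast
  ring

lemma zeta_prim : IsPrimitiveRoot ζ 9 := by
  have := Complex.isPrimitiveRoot_exp 9 (by norm_num)
  simpa [ζ] using this

lemma zeta_six : ζ ^ 6 = -ζ ^ 3 - 1 := by
  have h3 : ω ^ 3 = 1 := omega_cube
  have h : (ω - 1) * (ω ^ 2 + ω + 1) = 0 := by linear_combination h3
  rcases mul_eq_zero.mp h with h | h
  · exact absurd (sub_eq_zero.mp h) omega_ne_one
  · rw [← zeta_pow_three] at h
    linear_combination h

/-- i√3 = 2ω + 1. -/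
lemma i_sqrt_three : I * (Real.sqrt 3 : ℂ) = 2 * ζ ^ 3 + 1 := by
  have h1 : ω = Complex.exp ((2 * Real.pi / 3 : ℝ) * I) := by
    rw [ω]; push_cast; ring_nf
  have hc : Real.cos (2 * Real.pi / 3) = -(1 / 2) := by
    rw [show 2 * Real.pi / 3 = Real.pi - Real.pi / 3 by ring, Real.cos_pi_sub,
      Real.cos_pi_div_three]
  have hs : Real.sin (2 * Real.pi / 3) = Real.sqrt 3 / 2 := by
    rw [show 2 * Real.pi / 3 = Real.pi - Real.pi / 3 by ring, Real.sin_pi_sub,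
      Real.sin_pi_div_three]
  rw [zeta_pow_three, h1, Complex.exp_mul_I, ← Complex.ofReal_cos, ← Complex.ofReal_sin, hc, hs]
  push_cast
  ring

lemma inv_i_sqrt_three : (I * (Real.sqrt 3 : ℂ))⁻¹ = -(2 * ζ ^ 3 + 1) / 3 := by
  rw [i_sqrt_three]
  apply inv_eq_of_mul_eq_one_right
  linear_combination (-4 / 3 : ℂ) * zeta_six

lemma Hmat_eq : Hmat = (-(2 * ζ ^ 3 + 1) / 3) •
    !![1, 1, 1; 1, ζ ^ 3, ζ ^ 6; 1, ζ ^ 6, ζ ^ 3] := by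
  rw [Hmat, inv_i_sqrt_three, ← zeta_pow_three]
  simp only [← pow_mul]

lemma Spow (n : ℕ) : Smat ^ n = Matrix.diagonal ![ζ ^ (8 * n), ζ ^ (8 * n), ζ ^ (11 * n)] := by
  have : Smat = Matrix.diagonal ![ζ ^ 8, ζ ^ 8, ζ ^ 11] := by
    ext i j
    fin_cases i <;> fin_cases j <;> simp [Smat, ← zeta_pow_three, ← pow_add]
  rw [this, Matrix.diagonal_pow]
  congr 1
  ext i
  fin_cases i <;> simp [pow_mul]

lemma Zpow (n : ℕ) : Zmat ^ n = Matrix.diagonal ![1, ζ ^ (3 * n), ζ ^ (6 * n)] := by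
  have : Zmat = Matrix.diagonal ![1, ζ ^ 3, ζ ^ 6] := by
    ext i j
    fin_cases i <;> fin_cases j <;> simp [Zmat, ← zeta_pow_three, ← pow_mul]
  rw [this, Matrix.diagonal_pow]
  congr 1
  ext i
  fin_cases i <;> simp [pow_mul]

lemma Xsq : Xmat ^ 2 = !![0, 1, 0; 0, 0, 1; 1, 0, 0] := by
  ext i j
  fin_cases i <;> fin_cases j <;> simp [Xmat, pow_two, Matrix.mul_apply, Fin.sum_univ_three, Matrix.vecMul_diagonal]

lemma Xcube : Xmat ^ 3 = 1 := by
  rw [pow_succ, Xsq]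
  ext i j
  fin_cases i <;> fin_cases j <;> simp [Xmat, Matrix.mul_apply, Fin.sum_univ_three, Matrix.vecMul_diagonal]

lemma Hsq : Hmat ^ 2 = !![-1, 0, 0; 0, 0, -1; 0, -1, 0] := by
  have h6 := zeta_six
  rw [pow_two, Hmat_eq]
  ext i j
  fin_cases i <;> fin_cases j <;>
    simp [Matrix.mul_apply, Fin.sum_univ_three, Matrix.vecMul_diagonal] <;> grind

lemma Hfour : Hmat ^ 4 = 1 := by
  rw [show 4 = 2 * 2 from rfl, pow_mul, Hsq]
  ext i j
  fin_cases i <;> fin_cases j <;> simp [pow_two, Matrix.mul_apply, Fin.sum_univ_three, Matrix.vecMul_diagonal]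

lemma Zcube : Zmat ^ 3 = 1 := by
  have h9 : ζ ^ 9 = 1 := zeta_prim.pow_eq_one
  rw [Zpow, ← Matrix.diagonal_one]
  congr 1
  ext i
  fin_cases i <;> simp <;> grind

lemma Snine : Smat ^ 9 = 1 := by
  have h9 : ζ ^ 9 = 1 := zeta_prim.pow_eq_one
  rw [Spow, ← Matrix.diagonal_one]
  congr 1
  ext i
  fin_cases i <;> simp [pow_mul] <;> grind

/-- The eighteen coordinates identities behind `h s h = s² h³ s⁵`. -/
lemma rel_hsh : Hmat * Smat ^ 1 * Hmat = Smat ^ 2 * (Hmat ^ 2 * Hmat) * Smat ^ 5 := by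
  have h6 := zeta_six
  rw [Spow, Spow, Spow, Hsq, Hmat_eq]
  ext i j
  fin_cases i <;> fin_cases j <;>
    simp [Matrix.mul_apply, Fin.sum_univ_three, Matrix.vecMul_diagonal] <;> grind

lemma rel_hssh : Hmat * Smat ^ 2 * Hmat = Smat ^ 1 * Hmat * Xmat * Zmat ^ 1 * Smat ^ 4 := by
  have h6 := zeta_six
  rw [Spow, Spow, Spow, Zpow, Hmat_eq]
  ext i j
  fin_cases i <;> fin_cases j <;>
    simp [Matrix.mul_apply, Fin.sum_univ_three, Matrix.vecMul_diagonal, Xmat] <;> grind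

lemma rel_sz : Smat ^ 1 * Zmat ^ 1 = Zmat ^ 1 * Smat ^ 1 := by
  rw [Spow, Zpow, Matrix.diagonal_mul_diagonal, Matrix.diagonal_mul_diagonal]
  simp only [mul_comm]

lemma rel_zx : Zmat ^ 1 * Xmat = Xmat * Zmat ^ 1 * Smat ^ 6 := by
  have h6 := zeta_six
  rw [Spow, Zpow]
  ext i j
  fin_cases i <;> fin_cases j <;>
    simp [Matrix.mul_apply, Fin.sum_univ_three, Matrix.vecMul_diagonal, Xmat] <;> grind

lemma rel_sx : Smat ^ 1 * Xmat = Xmat * Zmat ^ 1 * Smat ^ 1 := by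
  have h6 := zeta_six
  rw [Spow, Zpow]
  ext i j
  fin_cases i <;> fin_cases j <;>
    simp [Matrix.mul_apply, Fin.sum_univ_three, Matrix.vecMul_diagonal, Xmat] <;> grind

lemma rel_shh : Smat ^ 1 * Hmat ^ 2 = Hmat ^ 2 * Zmat ^ 1 * Smat ^ 1 := by
  have h6 := zeta_six
  rw [Spow, Zpow, Hsq]
  ext i j
  fin_cases i <;> fin_cases j <;>
    simp [Matrix.mul_apply, Fin.sum_univ_three, Matrix.vecMul_diagonal] <;> grind

lemma rel_hx : Hmat * Xmat = Zmat ^ 1 * Hmat := by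
  have h6 := zeta_six
  rw [Zpow, Hmat_eq]
  ext i j
  fin_cases i <;> fin_cases j <;>
    simp [Matrix.mul_apply, Fin.sum_univ_three, Matrix.vecMul_diagonal, Xmat] <;> grind

lemma rel_hz : Hmat * Zmat ^ 1 = Xmat ^ 2 * Hmat := by
  have h6 := zeta_six
  rw [Zpow, Xsq, Hmat_eq]
  ext i j
  fin_cases i <;> fin_cases j <;>
    simp [Matrix.mul_apply, Fin.sum_univ_three, Matrix.vecMul_diagonal] <;> grind

lemma rel_sssh : Smat ^ 3 * Hmat = Hmat * Smat ^ 3 := by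
  have h6 := zeta_six
  rw [Spow, Hmat_eq]
  ext i j
  fin_cases i <;> fin_cases j <;>
    simp [Matrix.mul_apply, Fin.sum_univ_three, Matrix.vecMul_diagonal] <;> grind

/-- A subset of a group that is finite, contains 1 and is stable under left multiplication by the
generators contains the generated subgroup. -/
lemma closure_subset_of_finite {G : Type*} [Group G] (A T : Set G) (hT : T.Finite) (h1 : (1 : G) ∈ T)
    (hA : ∀ a ∈ A, ∀ g ∈ T, a * g ∈ T) : (Subgroup.closure A : Set G) ⊆ T := by
  have hinv : ∀ a ∈ A, ∀ g ∈ T, a⁻¹ * g ∈ T := by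
    intro a ha g hg
    have hinj : Set.InjOn (fun y => a * y) T := fun y _ y' _ h => mul_left_cancel h
    have himg : Set.image (fun y => a * y) T = T := by
      apply Set.eq_of_subset_of_ncard_le _ _ hT
      · rintro _ ⟨y, hy, rfl⟩
        exact hA a ha y hy
      · rw [hinj.ncard_image]
    rw [← himg] at hg
    obtain ⟨y, hy, hyg⟩ := hg
    have : a * y = g := hyg
    rw [← this, inv_mul_cancel_left]
    exact hy
  intro g hg
  induction hg using Subgroup.closure_induction_left with
  | one => exact h1
  | mul_left a ha y _ ih => exact hA a ha y ih
  | inv_mul_cancel a ha y _ ih => exact hinv a ha y ih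

section Abstract

variable {G : Type*} [Group G]

/-- Coset representatives. -/
def trep (h s : G) : Fin 8 → G :=
  ![1, h ^ 2, h, s * h, s ^ 2 * h, h ^ 3, s * h ^ 3, s ^ 2 * h ^ 3]

/-- Normal form in the subgroup of order 81. -/
def knf (x z s : G) (b c j : ℕ) : G := x ^ b * z ^ c * s ^ j

/-- The relations between the generators. -/
structure Rels (h s x z : G) : Prop where
  x3 : x ^ 3 = 1
  z3 : z ^ 3 = 1
  s9 : s ^ 9 = 1
  h4 : h ^ 4 = 1
  sz : s * z = z * s
  zx : z * x = x * z * s ^ 6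
  sx : s * x = x * z * s
  shh : s * h ^ 2 = h ^ 2 * z * s
  hx : h * x = z * h
  hz : h * z = x ^ 2 * h
  s3h : s ^ 3 * h = h * s ^ 3
  hsh : h * s * h = s ^ 2 * h ^ 3 * s ^ 5
  hssh : h * s ^ 2 * h = s * h * x * z * s ^ 4

namespace Rels

variable {h s x z : G}

lemma csz (R : Rels h s x z) : Commute s z := R.sz

lemma zs_pow (R : Rels h s x z) (n : ℕ) : (z * s) ^ n = z ^ n * s ^ n := (R.csz.symm).mul_pow n

lemma sx_pow (R : Rels h s x z) (n : ℕ) : s ^ n * x = x * (z ^ n * s ^ n) := by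
  have : SemiconjBy x (z * s) s := by
    have := R.sx
    simp only [SemiconjBy, ← mul_assoc]
    exact this.symm
  rw [← R.zs_pow]
  exact (this.pow_right n).eq.symm

lemma cs3x (R : Rels h s x z) : Commute (s ^ 3) x := by
  have := R.sx_pow 3
  rw [R.z3, one_mul] at this
  exact this

lemma cs3z (R : Rels h s x z) : Commute (s ^ 3) z := R.csz.pow_left 3

lemma zx_pow (R : Rels h s x z) (n : ℕ) : z ^ n * x = x * (z ^ n * s ^ (6 * n)) := by
  have h1 : SemiconjBy x (z * s ^ 6) z := by
    have := R.zx
    simp only [SemiconjBy, ← mul_assoc]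
    exact this.symm
  have h2 : (z * s ^ 6) ^ n = z ^ n * s ^ (6 * n) := by
    rw [(R.csz.symm.pow_right 6).mul_pow, pow_mul]
  rw [← h2]
  exact (h1.pow_right n).eq.symm

lemma knf_mul_s (_ : Rels h s x z) (b c j : ℕ) : knf x z s b c j * s = knf x z s b c (j + 1) := by
  simp only [knf, pow_succ, mul_assoc]

lemma knf_mul_z (R : Rels h s x z) (b c j : ℕ) : knf x z s b c j * z = knf x z s b (c + 1) j := by
  simp only [knf, pow_succ, mul_assoc]
  rw [(R.csz.pow_left j).eq]

lemma knf_mul_x (R : Rels h s x z) (b c j : ℕ) :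
    knf x z s b c j * x = knf x z s (b + 1) (c + j) (j + 6 * c) := by
  have h1 : s ^ (6 * c) * z ^ j = z ^ j * s ^ (6 * c) := (R.csz.pow_pow _ _).eq
  calc knf x z s b c j * x = x ^ b * z ^ c * (s ^ j * x) := by simp only [knf, mul_assoc]
    _ = x ^ b * (z ^ c * x) * (z ^ j * s ^ j) := by rw [R.sx_pow]; simp only [mul_assoc]
    _ = x ^ b * x * (z ^ c * (s ^ (6 * c) * z ^ j) * s ^ j) := by
        rw [R.zx_pow]; simp only [mul_assoc]
    _ = knf x z s (b + 1) (c + j) (j + 6 * c) := by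
        rw [h1, knf, pow_succ, pow_add z, add_comm j, pow_add s]; simp only [mul_assoc]

lemma knf_mul (R : Rels h s x z) (b c j b' c' j' : ℕ) :
    ∃ b₁ c₁ j₁, knf x z s b c j * knf x z s b' c' j' = knf x z s b₁ c₁ j₁ := by
  induction j' with
  | succ n ih =>
    obtain ⟨b₁, c₁, j₁, e⟩ := ih
    refine ⟨b₁, c₁, j₁ + 1, ?_⟩
    rw [← R.knf_mul_s b' c' n, ← mul_assoc, e, R.knf_mul_s b₁ c₁ j₁]
  | zero =>
    induction c' with
    | succ n ih =>
      obtain ⟨b₁, c₁, j₁, e⟩ := ih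
      refine ⟨b₁, c₁ + 1, j₁, ?_⟩
      rw [← R.knf_mul_z b' n 0, ← mul_assoc, e, R.knf_mul_z b₁ c₁ j₁]
    | zero =>
      induction b' with
      | zero => exact ⟨b, c, j, by simp [knf]⟩
      | succ n ih =>
        obtain ⟨b₁, c₁, j₁, e⟩ := ih
        have : knf x z s (n + 1) 0 0 = knf x z s n 0 0 * x := by simp [knf, pow_succ]
        refine ⟨b₁ + 1, c₁ + j₁, j₁ + 6 * c₁, ?_⟩
        rw [this, ← mul_assoc, e, R.knf_mul_x b₁ c₁ j₁]

lemma knf_mod (R : Rels h s x z) (b c j : ℕ) : knf x z s b c j = knf x z s (b % 3) (c % 3) (j % 9) := by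
  rw [knf, knf, pow_eq_pow_mod b R.x3, pow_eq_pow_mod c R.z3, pow_eq_pow_mod j R.s9]

lemma hhz (R : Rels h s x z) : h ^ 2 * z = z ^ 2 * h ^ 2 := by
  have h1 : SemiconjBy h x z := R.hx
  have h2 : SemiconjBy h z (x ^ 2) := R.hz
  have h3 := (h1.pow_right 2).mul_left h2
  rw [← pow_two] at h3
  exact h3

lemma hhx (R : Rels h s x z) : h ^ 2 * x = x ^ 2 * h ^ 2 := by
  have h1 : SemiconjBy h x z := R.hx
  have h2 : SemiconjBy h z (x ^ 2) := R.hz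
  have h3 := h2.mul_left h1
  rw [← pow_two] at h3
  exact h3

lemma zhh (R : Rels h s x z) : z * h ^ 2 = h ^ 2 * z ^ 2 := by
  have h1 : SemiconjBy (h ^ 2) z (z ^ 2) := R.hhz
  have h2 := (h1.pow_right 2).eq
  rw [h2, ← pow_mul, pow_eq_pow_mod (2 * 2) R.z3]
  simp

lemma xhh (R : Rels h s x z) : x * h ^ 2 = h ^ 2 * x ^ 2 := by
  have h1 : SemiconjBy (h ^ 2) x (x ^ 2) := R.hhx
  have h2 := (h1.pow_right 2).eq
  rw [h2, ← pow_mul, pow_eq_pow_mod (2 * 2) R.x3]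
  simp

lemma shh_pow (R : Rels h s x z) (n : ℕ) : s ^ n * h ^ 2 = h ^ 2 * (z ^ n * s ^ n) := by
  have h1 : SemiconjBy (h ^ 2) (z * s) s := by
    simp only [SemiconjBy, ← mul_assoc]
    exact R.shh.symm
  rw [← R.zs_pow]
  exact (h1.pow_right n).eq.symm

lemma hhhz (R : Rels h s x z) : h ^ 3 * z = x * h ^ 3 := by
  have h1 : SemiconjBy (h ^ 2) z (z ^ 2) := R.hhz
  have h2 : SemiconjBy h z (x ^ 2) := R.hz
  have h3 := ((h2.pow_right 2).mul_left h1).eq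
  rw [← pow_succ', ← pow_mul, pow_eq_pow_mod (2 * 2) R.x3] at h3
  simpa using h3

lemma cs3h (R : Rels h s x z) : Commute (s ^ 3) h := R.s3h

lemma cs3_trep (R : Rels h s x z) (i : Fin 8) : Commute (s ^ 3) (trep h s i) := by
  have c1 := R.cs3h
  have c2 : Commute (s ^ 3) s := (Commute.refl s).pow_left 3
  fin_cases i
  · exact Commute.one_right _
  · exact c1.pow_right 2
  · exact c1
  · exact c2.mul_right c1
  · exact (c2.pow_right 2).mul_right c1
  · exact c1.pow_right 3
  · exact c2.mul_right (c1.pow_right 3)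
  · exact (c2.pow_right 2).mul_right (c1.pow_right 3)

lemma h_trep (R : Rels h s x z) (i : Fin 8) : ∃ i' b c j, h * trep h s i = trep h s i' * knf x z s b c j := by
  fin_cases i
  · exact ⟨2, 0, 0, 0, by simp [trep, knf]⟩
  · exact ⟨5, 0, 0, 0, by simp [trep, knf, pow_succ']⟩
  · exact ⟨1, 0, 0, 0, by simp [trep, knf, pow_succ']⟩
  · refine ⟨7, 0, 0, 5, ?_⟩
    have := R.hsh
    simpa [trep, knf, ← mul_assoc] using this
  · refine ⟨3, 1, 1, 4, ?_⟩
    have := R.hssh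
    simpa [trep, knf, ← mul_assoc] using this
  · refine ⟨0, 0, 0, 0, ?_⟩
    have := R.h4
    rw [pow_succ'] at this
    simpa [trep, knf] using this
  · refine ⟨4, 0, 5, 5, ?_⟩
    have e : h * (s * h ^ 3) = s ^ 2 * h * (z ^ 5 * s ^ 5) := by
      calc h * (s * h ^ 3) = (h * s * h) * h ^ 2 := by
            rw [pow_succ' h 2]; simp only [mul_assoc]
        _ = s ^ 2 * h ^ 3 * (s ^ 5 * h ^ 2) := by rw [R.hsh]; simp only [mul_assoc]
        _ = s ^ 2 * (h ^ 4 * h) * (z ^ 5 * s ^ 5) := by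
            rw [R.shh_pow, show h ^ 4 * h = h ^ 3 * h ^ 2 by group]; simp only [mul_assoc]
        _ = _ := by rw [R.h4, one_mul]
    simpa [trep, knf] using e
  · refine ⟨6, 2, 6, 4, ?_⟩
    have e : h * (s ^ 2 * h ^ 3) = s * h ^ 3 * (x ^ 2 * z ^ 6 * s ^ 4) := by
      calc h * (s ^ 2 * h ^ 3) = (h * s ^ 2 * h) * h ^ 2 := by
            rw [pow_succ' h 2]; simp only [mul_assoc]
        _ = s * h * x * z * (s ^ 4 * h ^ 2) := by rw [R.hssh]; simp only [mul_assoc]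
        _ = s * h * x * (z * h ^ 2) * (z ^ 4 * s ^ 4) := by
            rw [R.shh_pow]; simp only [mul_assoc]
        _ = s * h * (x * h ^ 2) * (z ^ 2 * z ^ 4 * s ^ 4) := by
            rw [R.zhh]; simp only [mul_assoc]
        _ = s * (h * h ^ 2) * (x ^ 2 * z ^ 6 * s ^ 4) := by
            rw [R.xhh, ← pow_add]; simp only [mul_assoc]
        _ = _ := by rw [← pow_succ']
    simpa [trep, knf] using e

lemma s_trep (R : Rels h s x z) (i : Fin 8) : ∃ i' b c j, s * trep h s i = trep h s i' * knf x z s b c j := by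
  fin_cases i
  · exact ⟨0, 0, 0, 1, by simp [trep, knf]⟩
  · refine ⟨1, 0, 1, 1, ?_⟩
    have := R.shh
    simpa [trep, knf, ← mul_assoc] using this
  · exact ⟨3, 0, 0, 0, by simp [trep, knf]⟩
  · exact ⟨4, 0, 0, 0, by simp [trep, knf, pow_two, mul_assoc]⟩
  · refine ⟨2, 0, 0, 3, ?_⟩
    have := R.s3h
    nth_rewrite 1 [pow_succ' s 2] at this
    rw [mul_assoc] at this
    simpa [trep, knf] using this
  · exact ⟨6, 0, 0, 0, by simp [trep, knf]⟩
  · exact ⟨7, 0, 0, 0, by simp [trep, knf, pow_two, mul_assoc]⟩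
  · refine ⟨5, 0, 0, 3, ?_⟩
    have := (R.cs3h.pow_right 3).eq
    nth_rewrite 1 [pow_succ' s 2] at this
    rw [mul_assoc] at this
    simpa [trep, knf] using this

/-- Conjugation of z by the coset representatives; the exponents of x and z. -/
lemma trep_z (R : Rels h s x z) (i : Fin 8) : ∃ m, trep h s i * z =
    knf x z s (![0, 0, 2, 2, 2, 1, 1, 1] i) (![1, 2, 0, 2, 1, 0, 1, 2] i) m * trep h s i := by
  have sxx : s * x ^ 2 = x ^ 2 * z ^ 2 * s ^ 7 := by
    have h0 : s * x ^ 2 = knf x z s 0 0 1 * x * x := by simp [knf, pow_two, mul_assoc]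
    rw [h0, R.knf_mul_x, R.knf_mul_x]
    simp [knf]
  have sz2 (n m : ℕ) : s ^ n * z ^ m = z ^ m * s ^ n := (R.csz.pow_pow n m).eq
  have s1z (m : ℕ) : s * z ^ m = z ^ m * s := (R.csz.pow_right m).eq
  have ssxx : s ^ 2 * x ^ 2 = x ^ 2 * z ^ 4 * s ^ 14 := by
    calc s ^ 2 * x ^ 2 = s * (s * x ^ 2) := by rw [pow_two s, mul_assoc]
      _ = s * x ^ 2 * z ^ 2 * s ^ 7 := by
          nth_rewrite 1 [sxx]; simp only [mul_assoc]
      _ = x ^ 2 * z ^ 2 * (s ^ 7 * z ^ 2) * s ^ 7 := by rw [sxx]; simp only [mul_assoc]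
      _ = x ^ 2 * (z ^ 2 * z ^ 2) * (s ^ 7 * s ^ 7) := by rw [sz2]; simp only [mul_assoc]
      _ = _ := by rw [← pow_add, ← pow_add]
  fin_cases i
  · exact ⟨0, by simp [trep, knf]⟩
  · refine ⟨0, ?_⟩
    have := R.hhz
    simpa [trep, knf] using this
  · refine ⟨0, ?_⟩
    have := R.hz
    simpa [trep, knf] using this
  · refine ⟨6, ?_⟩
    have e : s * h * z = x ^ 2 * z ^ 2 * s ^ 6 * (s * h) := by
      rw [mul_assoc, R.hz, ← mul_assoc, sxx, pow_succ s 6]; simp only [mul_assoc]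
    simpa [trep, knf] using e
  · refine ⟨12, ?_⟩
    have e : s ^ 2 * h * z = x ^ 2 * z * s ^ 12 * (s ^ 2 * h) := by
      have z4 : z ^ 4 = z := by rw [pow_succ, R.z3, one_mul]
      rw [mul_assoc, R.hz, ← mul_assoc, ssxx, z4, pow_add s 12 2]; simp only [mul_assoc]
    simpa [trep, knf] using e
  · refine ⟨0, ?_⟩
    have := R.hhhz
    simpa [trep, knf] using this
  · refine ⟨0, ?_⟩
    have e : s * h ^ 3 * z = x * z * (s * h ^ 3) := by
      rw [mul_assoc, R.hhhz, ← mul_assoc, R.sx]; simp only [mul_assoc]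
    simpa [trep, knf] using e
  · refine ⟨0, ?_⟩
    have e : s ^ 2 * h ^ 3 * z = x * z ^ 2 * (s ^ 2 * h ^ 3) := by
      rw [mul_assoc, R.hhhz, ← mul_assoc, R.sx_pow]; simp only [mul_assoc]
    simpa [trep, knf] using e

lemma knf_z (R : Rels h s x z) (b c j : ℕ) : knf x z s b c j * z = z * (s ^ 3) ^ b * knf x z s b c j := by
  have h1 : SemiconjBy z x (x * s ^ 6) := by
    simp only [SemiconjBy]
    rw [R.zx, mul_assoc, mul_assoc, (R.csz.pow_left 6).eq]
  have e1 : z * x ^ b = x ^ b * s ^ (6 * b) * z := by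
    have c : Commute x (s ^ 6) := by
      have := (R.cs3x.pow_left 2).symm
      rwa [← pow_mul] at this
    have := (h1.pow_right b).eq
    rwa [c.mul_pow, ← pow_mul] at this
  have c3 : Commute ((s ^ 3) ^ b) (x ^ b) := R.cs3x.pow_pow b b
  have c4 : Commute (s ^ (6 * b)) z := R.csz.pow_left _
  have c5 : Commute (s ^ j) (z) := R.csz.pow_left _
  have one : s ^ (6 * b) * (s ^ 3) ^ b = 1 := by
    rw [← pow_mul, ← pow_add, show 6 * b + 3 * b = 9 * b by ring, pow_mul, R.s9, one_pow]
  have c6 : Commute z ((s ^ 3) ^ b) := (R.cs3z.pow_left b).symm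
  symm
  calc z * (s ^ 3) ^ b * knf x z s b c j
      = z * ((s ^ 3) ^ b * x ^ b) * z ^ c * s ^ j := by simp only [knf, mul_assoc]
    _ = (z * x ^ b) * (s ^ 3) ^ b * z ^ c * s ^ j := by rw [c3.eq]; simp only [mul_assoc]
    _ = x ^ b * s ^ (6 * b) * (z * (s ^ 3) ^ b) * z ^ c * s ^ j := by
        rw [e1]; simp only [mul_assoc]
    _ = x ^ b * (s ^ (6 * b) * (s ^ 3) ^ b) * z * z ^ c * s ^ j := by
        rw [c6.eq]; simp only [mul_assoc]
    _ = x ^ b * z ^ c * (z * s ^ j) := by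
        rw [one, mul_one, mul_assoc (x ^ b) z, ← pow_succ', pow_succ]; simp only [mul_assoc]
    _ = knf x z s b c j * z := by rw [← c5.eq]; simp only [knf, mul_assoc]

lemma conj_z (R : Rels h s x z) (i : Fin 8) (b c j : ℕ) : ∃ m,
    (trep h s i * knf x z s b c j) * z * (trep h s i * knf x z s b c j)⁻¹ =
    knf x z s (![0, 0, 2, 2, 2, 1, 1, 1] i) (![1, 2, 0, 2, 1, 0, 1, 2] i) m := by
  obtain ⟨m, hm⟩ := R.trep_z i
  refine ⟨m + 3 * b, ?_⟩
  rw [mul_inv_eq_iff_eq_mul]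
  have hc := ((R.cs3_trep i).pow_left b).eq
  rw [mul_assoc, R.knf_z, ← mul_assoc, ← mul_assoc, hm, mul_assoc _ (trep h s i), ← hc]
  simp only [knf, pow_add, pow_mul, mul_assoc]

/-- The normal form map. -/
def nf (_ : Rels h s x z) (p : Fin 8 × Fin 3 × Fin 3 × Fin 9) : G :=
  trep h s p.1 * knf x z s p.2.1 p.2.2.1 p.2.2.2

lemma mem_range_nf (R : Rels h s x z) (i : Fin 8) (b c j : ℕ) :
    trep h s i * knf x z s b c j ∈ Set.range R.nf := by
  refine ⟨(i, ⟨b % 3, Nat.mod_lt _ (by norm_num)⟩, ⟨c % 3, Nat.mod_lt _ (by norm_num)⟩,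
    ⟨j % 9, Nat.mod_lt _ (by norm_num)⟩), ?_⟩
  rw [R.knf_mod b c j]
  rfl

lemma closure_eq (R : Rels h s x z) : (Subgroup.closure {h, s} : Set G) = Set.range R.nf := by
  apply Set.Subset.antisymm
  · apply closure_subset_of_finite _ _ (Set.finite_range _)
    · have := R.mem_range_nf 0 0 0 0
      simpa [trep, knf] using this
    · rintro a (rfl | rfl) _ ⟨⟨i, b, c, j⟩, rfl⟩
      · obtain ⟨i', b', c', j', e⟩ := R.h_trep i
        obtain ⟨b₁, c₁, j₁, e'⟩ := R.knf_mul b' c' j' b c j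
        rw [nf, ← mul_assoc, e, mul_assoc, e']
        exact R.mem_range_nf _ _ _ _
      · obtain ⟨i', b', c', j', e⟩ := R.s_trep i
        obtain ⟨b₁, c₁, j₁, e'⟩ := R.knf_mul b' c' j' b c j
        rw [nf, ← mul_assoc, e, mul_assoc, e']
        exact R.mem_range_nf _ _ _ _
  · rintro _ ⟨⟨i, b, c, j⟩, rfl⟩
    have hh : h ∈ Subgroup.closure {h, s} := Subgroup.subset_closure (by simp)
    have hs : s ∈ Subgroup.closure {h, s} := Subgroup.subset_closure (by simp)
    have hz : z ∈ Subgroup.closure {h, s} := by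
      have e : z = (h ^ 2)⁻¹ * (s * h ^ 2) * s⁻¹ := by rw [R.shh]; group
      rw [e]
      exact mul_mem (mul_mem (inv_mem (pow_mem hh 2)) (mul_mem hs (pow_mem hh 2))) (inv_mem hs)
    have hx : x ∈ Subgroup.closure {h, s} := by
      have e : x = h⁻¹ * (z * h) := by rw [← R.hx]; group
      rw [e]
      exact mul_mem (inv_mem hh) (mul_mem hz hh)
    refine mul_mem ?_ (mul_mem (mul_mem (pow_mem hx _) (pow_mem hz _)) (pow_mem hs _))
    fin_cases i
    · exact one_mem _
    · exact pow_mem hh 2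
    · exact hh
    · exact mul_mem hs hh
    · exact mul_mem (pow_mem hs 2) hh
    · exact pow_mem hh 3
    · exact mul_mem hs (pow_mem hh 3)
    · exact mul_mem (pow_mem hs 2) (pow_mem hh 3)

lemma nf_injective (R : Rels h s x z) (inj : ∀ b c j b' c' j' : ℕ, knf x z s b c j = knf x z s b' c' j' →
    b % 3 = b' % 3 ∧ c % 3 = c' % 3 ∧ j % 9 = j' % 9) : Function.Injective R.nf := by
  rintro ⟨i, b, c, j⟩ ⟨i', b', c', j'⟩ e
  simp only [nf] at e
  obtain ⟨m, hm⟩ := R.conj_z i b c j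
  obtain ⟨m', hm'⟩ := R.conj_z i' b' c' j'
  rw [e, hm'] at hm
  obtain ⟨e1, e2, -⟩ := inj _ _ _ _ _ _ hm
  have hi : i = i' := by
    clear hm hm' e
    revert e1 e2
    revert i i'
    decide
  subst hi
  obtain ⟨hb, hc, hj⟩ := inj _ _ _ _ _ _ (mul_left_cancel e)
  have hb' : b = b' := by ext; omega
  have hc' : c = c' := by ext; omega
  have hj' : j = j' := by ext; omega
  rw [hb', hc', hj']

end Rels

end Abstract

lemma coe_Hg : (Hg : Matrix (Fin 3) (Fin 3) ℂ) = Hmat := rfl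
lemma coe_Sg : (Sg : Matrix (Fin 3) (Fin 3) ℂ) = Smat := rfl
lemma coe_Xg : (Xg : Matrix (Fin 3) (Fin 3) ℂ) = Xmat := rfl
lemma coe_Zg : (Zg : Matrix (Fin 3) (Fin 3) ℂ) = Zmat := rfl

lemma cliff_rels : Rels Hg Sg Xg Zg where
  x3 := Units.ext (by simpa [coe_Xg] using Xcube)
  z3 := Units.ext (by simpa [coe_Zg] using Zcube)
  s9 := Units.ext (by simpa [coe_Sg] using Snine)
  h4 := Units.ext (by simpa [coe_Hg] using Hfour)
  sz := Units.ext (by simpa [coe_Sg, coe_Zg] using rel_sz)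
  zx := Units.ext (by simpa [coe_Sg, coe_Zg, coe_Xg] using rel_zx)
  sx := Units.ext (by simpa [coe_Sg, coe_Zg, coe_Xg] using rel_sx)
  shh := Units.ext (by simpa [coe_Sg, coe_Zg, coe_Hg] using rel_shh)
  hx := Units.ext (by simpa [coe_Hg, coe_Zg, coe_Xg] using rel_hx)
  hz := Units.ext (by simpa [coe_Hg, coe_Zg, coe_Xg] using rel_hz)
  s3h := Units.ext (by simpa [coe_Hg, coe_Sg] using rel_sssh)
  hsh := Units.ext (by
    have := rel_hsh
    rw [← pow_succ] at this
    simpa [coe_Hg, coe_Sg] using this)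
  hssh := Units.ext (by simpa [coe_Hg, coe_Sg, coe_Xg, coe_Zg] using rel_hssh)

lemma cliff_knf_inj (b c j b' c' j' : ℕ) (e : knf Xg Zg Sg b c j = knf Xg Zg Sg b' c' j') :
    b % 3 = b' % 3 ∧ c % 3 = c' % 3 ∧ j % 9 = j' % 9 := by
  have hpow (m n : ℕ) (h : ζ ^ m = ζ ^ n) : m % 9 = n % 9 := by
    rw [pow_eq_pow_mod m zeta_prim.pow_eq_one, pow_eq_pow_mod n zeta_prim.pow_eq_one] at h
    exact zeta_prim.pow_inj (Nat.mod_lt _ (by norm_num)) (Nat.mod_lt _ (by norm_num)) h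
  have hb : b % 3 < 3 := Nat.mod_lt _ (by norm_num)
  have hb' : b' % 3 < 3 := Nat.mod_lt _ (by norm_num)
  have hz := zeta_ne_zero
  have e' : Xmat ^ (b % 3) * (Zmat ^ c * Smat ^ j) = Xmat ^ (b' % 3) * (Zmat ^ c' * Smat ^ j') := by
    rw [← pow_eq_pow_mod b Xcube, ← pow_eq_pow_mod b' Xcube]
    have := congrArg Units.val e
    simpa [knf, coe_Xg, coe_Zg, coe_Sg, mul_assoc] using this
  rw [Zpow, Zpow, Spow, Spow, Matrix.diagonal_mul_diagonal, Matrix.diagonal_mul_diagonal] at e'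
  have key : b % 3 = b' % 3 ∧ ζ ^ (8 * j) = ζ ^ (8 * j') ∧
      ζ ^ (3 * c) * ζ ^ (8 * j) = ζ ^ (3 * c') * ζ ^ (8 * j') := by
    generalize b % 3 = p at *
    generalize b' % 3 = q at *
    have e0 := fun r => congrFun (congrFun e' r) 0
    have e1 := fun r => congrFun (congrFun e' r) 1
    have a0 := e0 0
    have a1 := e0 1
    have a2 := e0 2
    have d0 := e1 0
    have d1 := e1 1
    have d2 := e1 2
    clear e0 e1 e'
    have hx2 := Xsq
    rw [Xmat] at hx2
    interval_cases p <;> interval_cases q <;>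
      simp [Matrix.mul_diagonal, hx2, Xmat, hz] at a0 a1 a2 d0 d1 d2 ⊢ <;> tauto
  obtain ⟨k1, k2, k3⟩ := key
  refine ⟨k1, ?_⟩
  have h1 := hpow _ _ k2
  rw [← pow_add, ← pow_add] at k3
  have h2 := hpow _ _ k3
  omega

/-- The Clifford group 𝒞, i.e., the subgroup of GL(3,ℂ) generated by
H and S, is a finite group of order 648. -/
theorem clifford_group_has_order_648 :
    (Cliff : Set (GL (Fin 3) ℂ)).Finite ∧ Nat.card Cliff = 648 := by
  have h1 : (Cliff : Set (GL (Fin 3) ℂ)) = Set.range cliff_rels.nf := cliff_rels.closure_eq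
  refine ⟨h1 ▸ Set.finite_range _, ?_⟩
  have h2 : Nat.card Cliff = Nat.card (Set.range cliff_rels.nf) := by
    rw [← h1]
    rfl
  rw [h2, Nat.card_range_of_injective (cliff_rels.nf_injective cliff_knf_inj)]
  simp

end
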